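/- Let w be in B_n, a := w(1), 1 ≤ p ≤ n, p < q ≤ n, c := w(q), b := -c, and suppose a ≺ b. Let Delta(-1) denote the suffix of Delta beginning with (1,-1). Then, in Z[t], the sum over all increasing-admissible subsequences T of Delta(-1) with (wT)(1) = b of t^{(l(wT) - l(w) - |T|)/2} (1-t)^{|T|} equals t^{N_{ab}(w[2,q-1], w[q+1,n]) + tau'_{ac}} (1-t), where tau'_{ac} := 1 if 0 < a < c and 0 otherwise. -/

import Mathlib

/-!
Write `f(w, L)` for the sum of `t^((l(wT) - l(w) - |T|)/2) (1-t)^|T|` over the increasing-admissible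
subsequences `T` of a chain `L` that bring `b` to the first position (`chainSum`). Deciding whether
the first reflection `r` of `L = r :: L'` is used gives
`f(w, L) = f(w, L') + [l(w) < l(wr)] t^((l(wr) - l(w) - 1)/2) (1-t) f(wr, L')`.

The length is a sum of contributions of pairs of positions, and comparing them before and after
`(1,-j)` shows (`len_swap`, `len_neg`), for `a = w(1) ≺ z = -w(j)`, that
`l(w(1,-j)) - l(w) = 1 + 2 (N_{az}(w[2,j-1]) + N_{az}(±w[j+1,n]) + [a > 0 > z])` if `j > 1`, and
`l(w(1,-1)) - l(w) = 1 + 2 N_{a,-a}(w[2,n])` if `a > 0`. As `(1,-j)` is an involution, the length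
increases exactly when the first entry increases. So the first entry grows along an admissible
subsequence; the sum vanishes once it has passed `b`, and is `1` once it equals `b`.

For the suffix `Δ_{\bar s}` with `s ≥ q`, induction on `s - q` gives (`chainSum_suffixNeg`)
`f(w, Δ_{\bar s}) = t^E (1-t)`, where
`E = N_{ab}(w[2,q-1], w[q+1,s]) + N_{ab}(±w[s+1,n]) + [a > 0 > b]`.
In the inductive step put `z = -w(s)`. If `z` is not between `a` and `b`, then no subsequence
using `(1,-s)` contributes and `E` does not change. If `a ≺ z ≺ b`, then `N_{ab} = N_{az} + N_{zb}` on all other letters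
together with `boundary_identity` turns the recursion into
`t^(E+1) (1-t) + t^E (1-t)^2 = t^E (1-t)`. The reflection `(1,-1)` at the head of `Δ_{\bar 1}` is
treated in the same way, with `z = -a` (`chainSum_bar1`).
-/

open scoped BigOperators

namespace HL

/-! ### The order `≺` on nonzero integers in `[-n,n]`:
`1 ≺ 2 ≺ ... ≺ n ≺ -n ≺ -(n-1) ≺ ... ≺ -1`. -/

def slt (a b : ℤ) : Prop :=
  (0 < a ∧ b < 0) ∨ (0 < a ∧ 0 < b ∧ a < b) ∨ (a < 0 ∧ b < 0 ∧ a < b)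

instance slt.dec (a b : ℤ) : Decidable (slt a b) := by unfold slt; infer_instance

def sle (a b : ℤ) : Prop := slt a b ∨ a = b

instance sle.dec (a b : ℤ) : Decidable (sle a b) := by unfold sle; infer_instance

/-! ### Signed permutations (windows), reflections acting on the right -/

/-- The right action of a reflection on a window (or column), with 1-based
positions.  The reflection `(i, j)` with `j > 0` transposes positions `i` and
`j`; the reflection `(i, -j)` (i.e. `(i,\bar\jmath)`) with `i ≠ j` transposes
positions `i, j` and negates both entries; `(i, -i)` negates position `i`. -/
def applyRefl (l : List ℤ) (t : ℕ × ℤ) : List ℤ :=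
  if 0 < t.2 then
    (l.set (t.1 - 1) (l.getD (t.2.toNat - 1) 0)).set (t.2.toNat - 1) (l.getD (t.1 - 1) 0)
  else
    if t.1 = (-t.2).toNat then l.set (t.1 - 1) (-(l.getD (t.1 - 1) 0))
    else (l.set (t.1 - 1) (-(l.getD ((-t.2).toNat - 1) 0))).set ((-t.2).toNat - 1)
          (-(l.getD (t.1 - 1) 0))

def applyAll (w : List ℤ) (T : List (ℕ × ℤ)) : List ℤ := T.foldl applyRefl w

/-- The word `w[i,j] = w(i) w(i+1) ... w(j)`, 1-based and inclusive. -/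
def word (l : List ℤ) (i j : ℕ) : List ℤ := (l.drop (i - 1)).take (j + 1 - i)

/-- `N_{ab}(u)` = number of letters `c` of the word `u` with `a ≺ c ≺ b`. -/
def Nab (a b : ℤ) (u : List ℤ) : ℕ :=
  (u.filter (fun c => decide (slt a c ∧ slt c b))).length

/-- `ℓ₊(w) = #{(k,l) : k < l, w(k) ≻ w(l)}`. -/
def lplus (l : List ℤ) : ℕ :=
  (((Finset.range l.length) ×ˢ (Finset.range l.length)).filter
    (fun p => p.1 < p.2 ∧ slt (l.getD p.2 0) (l.getD p.1 0))).card

/-- `ℓ₋(w) = #{(k,l) : k ≤ l, w(k) ≻ -w(l)}`. -/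
def lminus (l : List ℤ) : ℕ :=
  (((Finset.range l.length) ×ˢ (Finset.range l.length)).filter
    (fun p => p.1 ≤ p.2 ∧ slt (-(l.getD p.2 0)) (l.getD p.1 0))).card

/-- The Coxeter length of a signed permutation given by its window. -/
def len (l : List ℤ) : ℕ := lplus l + lminus l

/-- The (finite) set of windows of all signed permutations in `B_n`. -/
def allWindows (n : ℕ) : Finset (List ℤ) :=
  Finset.image (fun w : Equiv.Perm (Fin n) × (Fin n → Bool) =>
    (List.finRange n).map (fun i =>
      if w.2 i then -(((w.1 i : ℕ) : ℤ) + 1) else ((w.1 i : ℕ) : ℤ) + 1)) Finset.univ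

/-- `w`-admissibility of a sequence of reflections: a strictly decreasing
chain in Bruhat order (recorded via the length function). -/
def decChain : List ℤ → List (ℕ × ℤ) → Bool
  | _, [] => true
  | w, t :: ts => (decide (len (applyRefl w t) < len w)) && decChain (applyRefl w t) ts

/-- Increasing-admissibility: a strictly increasing chain. -/
def incChain : List ℤ → List (ℕ × ℤ) → Bool
  | _, [] => true
  | w, t :: ts => (decide (len w < len (applyRefl w t))) && incChain (applyRefl w t) ts

/-- The subsequence of a chain `Γ` selected by a set `J` of (0-based) positions. -/
def selChain (Γ : List (ℕ × ℤ)) (J : Finset ℕ) : List (ℕ × ℤ) :=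
  (J.sort (· ≤ ·)).map (fun j => Γ.getD j (0, 0))

/-! ### The `λ`-chain of type `C_n` -/

/-- `Γ'_j = ((1,-j),(2,-j),...,(j-1,-j))`. -/
def gammaPrime (j : ℕ) : List (ℕ × ℤ) := (List.range (j - 1)).map (fun r => (r + 1, -(j : ℤ)))

/-- `Γ_j(k) = ((1,-j),...,(j-1,-j),(j,-(k+1)),...,(j,-n),(j,-j),(j,n),...,(j,k+1))`. -/
def gammaJK (n j k : ℕ) : List (ℕ × ℤ) :=
  gammaPrime j
    ++ (List.range (n - k)).map (fun r => (j, -((k + 1 + r : ℕ) : ℤ)))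
    ++ [(j, -(j : ℤ))]
    ++ (List.range (n - k)).map (fun r => (j, ((n - r : ℕ) : ℤ)))

/-- `Γ(k) = Γ'_2 ⋯ Γ'_k Γ_1(k) ⋯ Γ_k(k)` (type `C_n`). -/
def gammaChain (n k : ℕ) : List (ℕ × ℤ) :=
  ((List.range (k - 1)).map (fun r => gammaPrime (r + 2))).flatten
    ++ ((List.range k).map (fun r => gammaJK n (r + 1) k)).flatten

/-- `λ'_i = #{j : λ_j ≥ i}`, the conjugate partition. -/
def conj (n : ℕ) (lam : Fin n → ℕ) (i : ℕ) : ℕ :=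
  (Finset.univ.filter (fun j : Fin n => i ≤ lam j)).card

/-- `λ_1`, the largest part. -/
def lamOne (n : ℕ) (lam : Fin n → ℕ) : ℕ := Finset.univ.sup lam

/-- The fixed `λ`-chain `Γ = Γ^{λ_1} Γ^{λ_1-1} ⋯ Γ^1` with `Γ^i = Γ(λ'_i)`. -/
def lambdaChain (n : ℕ) (lam : Fin n → ℕ) : List (ℕ × ℤ) :=
  ((List.range (lamOne n lam)).map
    (fun r => gammaChain n (conj n lam (lamOne n lam - r)))).flatten

/-- The set `A(λ)` of admissible pairs `(w, J)`. -/
def ASet (n : ℕ) (lam : Fin n → ℕ) : Set (List ℤ × Finset ℕ) :=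
  {p | p.1 ∈ allWindows n ∧ p.2 ⊆ Finset.range (lambdaChain n lam).length ∧
    decChain p.1 (selChain (lambdaChain n lam) p.2) = true}

/-! ### Roots, coroots, affine reflections, and the weight `μ(T)` -/

/-- The root of type `C_n` corresponding to a symbol: `(i,j) ↦ ε_i - ε_j`,
`(i,-j) ↦ ε_i + ε_j` for `i < j`, and `(i,-i) ↦ 2ε_i`. -/
def rootVec (n : ℕ) (β : ℕ × ℤ) : Fin n → ℤ := fun r =>
  (if ((r : ℕ) + 1 : ℤ) = (β.1 : ℤ) then 1 else 0) +
  (if 0 < β.2 then (if ((r : ℕ) + 1 : ℤ) = β.2 then -1 else 0)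
   else (if ((r : ℕ) + 1 : ℤ) = -β.2 then 1 else 0))

/-- The coroot (type `C_n`): `(2ε_i)^∨ = ε_i`, the long rootss are unchanged. -/
def corootVec (n : ℕ) (β : ℕ × ℤ) : Fin n → ℤ :=
  if β.2 = -(β.1 : ℤ) then (fun r => if ((r : ℕ) + 1 : ℤ) = (β.1 : ℤ) then 1 else 0)
  else rootVec n β

/-- Standard inner product on `ℤ^n`. -/
def ip (n : ℕ) (u v : Fin n → ℤ) : ℤ := ∑ r, u r * v r

/-- The affine reflection in the hyperplane `{v : ⟨v, β^∨⟩ = c}`. -/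
def affRefl (n : ℕ) (β : ℕ × ℤ) (c : ℤ) (v : Fin n → ℤ) : Fin n → ℤ :=
  fun r => v r - (ip n v (corootVec n β) - c) * rootVec n β r

/-- `l_k = #{j ≤ k : β_j = β_k}` (here `k` is 0-based). -/
def lCount (Γ : List (ℕ × ℤ)) (k : ℕ) : ℕ := (Γ.take (k + 1)).count (Γ.getD k (0, 0))

/-- `μ(J) = \hat r_{j_1} ⋯ \hat r_{j_s}(λ)` for `J = {j_1 < ... < j_s}`. -/
def muJ (n : ℕ) (Γ : List (ℕ × ℤ)) (lamVec : Fin n → ℤ) (J : Finset ℕ) : Fin n → ℤ :=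
  (J.sort (· ≤ ·)).foldr (fun j v => affRefl n (Γ.getD j (0, 0)) ((lCount Γ j : ℕ) : ℤ) v) lamVec

/-- The linear action of a signed permutation (given by its window) on `ℤ^n`:
`w(ε_i) = ε_{w(i)}` with `ε_{-i} = -ε_i`. -/
def wAct (n : ℕ) (w : List ℤ) (v : Fin n → ℤ) : Fin n → ℤ := fun r =>
  ∑ i : Fin n, ((if w.getD i 0 = ((r : ℕ) + 1 : ℤ) then v i else 0) +
    (if w.getD i 0 = -(((r : ℕ) + 1 : ℤ)) then -(v i) else 0))

def lamVec (n : ℕ) (lam : Fin n → ℕ) : Fin n → ℤ := fun i => (lam i : ℤ)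

/-! ### Fillings of the doubled shape `\hat λ` -/

/-- A filling of the doubled shape, recorded by its primed columns `C'_{i,k}`
(`Cp i k`) and unprimed columns `C_{i,j}` (`Cu i j`). -/
structure Filling where
  Cp : ℕ → ℕ → List ℤ
  Cu : ℕ → ℕ → List ℤ

def validP (n : ℕ) (lam : Fin n → ℕ) (i k : ℕ) : Prop :=
  1 ≤ i ∧ i ≤ lamOne n lam ∧ 2 ≤ k ∧ k ≤ conj n lam i

def validU (n : ℕ) (lam : Fin n → ℕ) (i j : ℕ) : Prop :=
  1 ≤ i ∧ i ≤ lamOne n lam ∧ 1 ≤ j ∧ j ≤ conj n lam i ∧ (i = 1 → j = 1)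

instance validP.dec (n : ℕ) (lam : Fin n → ℕ) (i k : ℕ) : Decidable (validP n lam i k) := by
  unfold validP; infer_instance

instance validU.dec (n : ℕ) (lam : Fin n → ℕ) (i j : ℕ) : Decidable (validU n lam i j) := by
  unfold validU; infer_instance

/-- The right neighbour `C'_{i,k+1}` of `C'_{i,k}`, with the convention
`C'_{i,λ'_i+1} = C_{i,1}`. -/
def CpNxt (n : ℕ) (lam : Fin n → ℕ) (F : Filling) (i k : ℕ) : List ℤ :=
  if k < conj n lam i then F.Cp i (k + 1) else F.Cu i 1

/-- The right neighbour `C_{i,j+1}` of `C_{i,j}`, with the conventions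
`C_{i,λ'_i+1} = C'_{i-1,2}` (if `λ'_{i-1} > 1`) and `C_{i,λ'_i+1} = C_{i-1,1}`
(if `λ'_{i-1} = 1`). -/
def CuNxt (n : ℕ) (lam : Fin n → ℕ) (F : Filling) (i j : ℕ) : List ℤ :=
  if j < conj n lam i then F.Cu i (j + 1)
  else if 2 ≤ conj n lam (i - 1) then F.Cp (i - 1) 2 else F.Cu (i - 1) 1

/-- No two entries `a, b` of a column with `a = ±b`. -/
def colDistinct (c : List ℤ) : Prop :=
  ∀ p q : ℕ, p < q → q < c.length →
    c.getD p 0 ≠ c.getD q 0 ∧ c.getD p 0 ≠ -(c.getD q 0)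

/-- `R = (r_1 < r_2 < ... < r_p)` with `1 ≤ r_t < j ≤ d`. -/
def sortedR (R : List ℕ) (j d : ℕ) : Prop :=
  List.Chain' (· < ·) R ∧ (∀ r ∈ R, 1 ≤ r ∧ r < j) ∧ 1 ≤ j ∧ j ≤ d

/-- `D (r_1,-j) (r_2,-j) ⋯ (r_p,-j)`. -/
def cycleApply (D : List ℤ) (R : List ℕ) (j : ℕ) : List ℤ :=
  R.foldl (fun E r => applyRefl E (r, -(j : ℤ))) D

/-- The relation between `C_{i,j+1}[1,λ'_i] = E` and `C_{i,j} = D` in a filling: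
`E` differs from `D' = D(r_1,-j)⋯(r_p,-j)` only in position `j`,
`E(j) ∉ {±D'(r) : r ≠ j}` and `E(j) ⪯ D'(j)`. -/
def unprimedTrans (D E : List ℤ) (R : List ℕ) (j d : ℕ) : Prop :=
  (∀ r, 1 ≤ r → r ≤ d → r ≠ j →
    E.getD (r - 1) 0 = (cycleApply D R j).getD (r - 1) 0) ∧
  (∀ r, 1 ≤ r → r ≤ d → r ≠ j →
    E.getD (j - 1) 0 ≠ (cycleApply D R j).getD (r - 1) 0 ∧
    E.getD (j - 1) 0 ≠ -((cycleApply D R j).getD (r - 1) 0)) ∧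
  sle (E.getD (j - 1) 0) ((cycleApply D R j).getD (j - 1) 0)

/-- The set `F(λ)` of fillings of the doubled shape `\hat λ`. -/
def FSet (n : ℕ) (lam : Fin n → ℕ) : Set Filling :=
  {F |
    -- shape
    (∀ i k, (validP n lam i k → (F.Cp i k).length = conj n lam i) ∧
      (¬ validP n lam i k → F.Cp i k = [])) ∧
    (∀ i j, (validU n lam i j → (F.Cu i j).length = conj n lam i) ∧
      (¬ validU n lam i j → F.Cu i j = [])) ∧
    -- entries lie in `{±1, ..., ±n}`
    (∀ i k, validP n lam i k → ∀ a ∈ F.Cp i k, 1 ≤ a.natAbs ∧ a.natAbs ≤ n) ∧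
    (∀ i j, validU n lam i j → ∀ a ∈ F.Cu i j, 1 ≤ a.natAbs ∧ a.natAbs ≤ n) ∧
    -- (1) rows weakly decrease from left to right
    (∀ i k, validP n lam i k → ∀ r, 1 ≤ r → r ≤ conj n lam i →
      sle ((CpNxt n lam F i k).getD (r - 1) 0) ((F.Cp i k).getD (r - 1) 0)) ∧
    (∀ i j, 2 ≤ i → validU n lam i j → ∀ r, 1 ≤ r → r ≤ conj n lam i →
      sle ((CuNxt n lam F i j).getD (r - 1) 0) ((F.Cu i j).getD (r - 1) 0)) ∧
    -- (2) no column contains `a, b` with `a = ±b`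
    (∀ i k, validP n lam i k → colDistinct (F.Cp i k)) ∧
    (∀ i j, validU n lam i j → colDistinct (F.Cu i j)) ∧
    -- (3) primed transitions: `C'_{i,k+1} = C'_{i,k}(r_1,-k)⋯(r_p,-k)`
    (∀ i k, validP n lam i k → ∃ R : List ℕ, sortedR R k (conj n lam i) ∧
      CpNxt n lam F i k = cycleApply (F.Cp i k) R k) ∧
    -- (3) unprimed transitions
    (∀ i j, 2 ≤ i → validU n lam i j → ∃ R : List ℕ, sortedR R j (conj n lam i) ∧
      unprimedTrans (F.Cu i j) ((CuNxt n lam F i j).take (conj n lam i)) R j (conj n lam i))}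

/-! ### The filling map `f` -/

/-- Offset in `Γ` of the beginning of block `Γ^i` (the blocks are listed for
`i = λ_1` down to `1`). -/
def offsetBlock (n : ℕ) (lam : Fin n → ℕ) (i : ℕ) : ℕ :=
  ∑ r ∈ Finset.Ico (i + 1) (lamOne n lam + 1), (gammaChain n (conj n lam r)).length

/-- Offset in `Γ` of the beginning of the factor `Γ'_{i,k}`.-/
def offsetP (n : ℕ) (lam : Fin n → ℕ) (i k : ℕ) : ℕ :=
  offsetBlock n lam i + ∑ j ∈ Finset.Ico 2 k, (gammaPrime j).length

/-- Offset in `Γ` of the beginning of the factor `Γ_{i,j}`.-/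
def offsetU (n : ℕ) (lam : Fin n → ℕ) (i j : ℕ) : ℕ :=
  offsetBlock n lam i + (∑ k ∈ Finset.Ico 2 (conj n lam i + 1), (gammaPrime k).length)
    + ∑ j' ∈ Finset.Ico 1 j, (gammaJK n j' (conj n lam i)).length

/-- `π = w ⋅ (all selected reflections at positions < off)`. -/
def piW (n : ℕ) (lam : Fin n → ℕ) (w : List ℤ) (J : Finset ℕ) (off : ℕ) : List ℤ :=
  applyAll w (selChain (lambdaChain n lam) (J.filter (fun x => x < off)))

/-- The filling map `f`, sending an (admissible) pair `(w, J)` to a filling of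
the doubled shape `\hat λ`. -/
def fMap (n : ℕ) (lam : Fin n → ℕ) (w : List ℤ) (J : Finset ℕ) : Filling where
  Cp := fun i k => if validP n lam i k
    then (piW n lam w J (offsetP n lam i k)).take (conj n lam i) else []
  Cu := fun i j => if validU n lam i j
    then (piW n lam w J (offsetU n lam i j)).take (conj n lam i) else []

/-! ### Content of a filling -/

/-- The columns `\bar{C}^i = C'_{i,2} C_{i,1}` (left to right, `i = λ_1, ..., 1`)
of the compressed filling `\barσ` of shape `2λ`; by the conventions,
`C'_{i,2} = C_{i,1}` when `λ'_i = 1`. -/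
def compCols (n : ℕ) (lam : Fin n → ℕ) (F : Filling) : List (List ℤ) :=
  ((List.range (lamOne n lam)).map (fun t =>
    [(if 2 ≤ conj n lam (lamOne n lam - t) then F.Cp (lamOne n lam - t) 2
      else F.Cu (lamOne n lam - t) 1), F.Cu (lamOne n lam - t) 1])).flatten

/-- The content of a list of columns: the `i`-th coordinate is half the
difference between the numbers of occurrences of `i` and of `-i`. -/
def ctCols (n : ℕ) (cols : List (List ℤ)) : Fin n → ℚ := fun r =>
  ((cols.flatten.count (((r : ℕ) + 1 : ℕ) : ℤ) : ℚ) -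
    (cols.flatten.count (-(((r : ℕ) + 1 : ℕ) : ℤ)) : ℚ)) / 2

/-- The content `ct(σ)` of a filling `σ` of `\hatλ`. -/
def ctQ (n : ℕ) (lam : Fin n → ℕ) (F : Filling) : Fin n → ℚ :=
  ctCols n (compCols n lam F)

/-! ### The statistics `N(D,C)` and `des(D,C)` -/

/-- `σ_{ab} = 1` if `a` and `b` are both negative, else `0`. -/
def sigmaAB (a b : ℤ) : ℕ := if a < 0 ∧ b < 0 then 1 else 0

def allEntries (n : ℕ) : List ℤ :=
  (List.range n).map (fun r => ((r + 1 : ℕ) : ℤ)) ++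
    (List.range n).map (fun r => -((r + 1 : ℕ) : ℤ))

/-- Case 1: `N(D, D(r,-j)) = N_{\bar b, a}(D[r+1,j-1]) +
#{c : \bar b ≺ c ≺ a, c ∉ ±D[1,j]} + σ_{ab}` where `a = D(r)`, `b = D(j)`. -/
def N1 (n : ℕ) (D : List ℤ) (r j : ℕ) : ℕ :=
  Nab (-(D.getD (j - 1) 0)) (D.getD (r - 1) 0) (word D (r + 1) (j - 1)) +
  ((allEntries n).filter (fun c => decide (slt (-(D.getD (j - 1) 0)) c ∧
    slt c (D.getD (r - 1) 0) ∧ c ∉ D.take j ∧ c ∉ (D.take j).map (fun x => -x)))).length +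
  sigmaAB (D.getD (r - 1) 0) (D.getD (j - 1) 0)

/-- Case 2: `N(D, D(r_1,-j)⋯(r_p,-j)) = ∑ N(D_{t-1}, D_t)`. -/
def cycleN (n : ℕ) : List ℤ → List ℕ → ℕ → ℕ
  | _, [], _ => 0
  | D, r :: rs, j => N1 n D r j + cycleN n (applyRefl D (r, -(j : ℤ))) rs j

/-- The possible values `(N(D,C), des(D,C))` arising from the case-by-case
definition of the statistics (cases 0, 2, 3; case 1 is case 2 with `p = 1`).
If `C` is one box taller than `D`, `C` is replaced by `C[1,d]`. -/
def NdesCand (n : ℕ) (D C : List ℤ) : Set (ℕ × ℕ) :=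
  {x |
    (C.take D.length = D ∧ x = (0, 0)) ∨
    (∃ j R, sortedR R j D.length ∧ R ≠ [] ∧ C.take D.length = cycleApply D R j ∧
      x = (cycleN n D R j, R.length)) ∨
    (∃ j R, sortedR R j D.length ∧
      (∀ r, 1 ≤ r → r ≤ D.length → r ≠ j →
        (C.take D.length).getD (r - 1) 0 = (cycleApply D R j).getD (r - 1) 0) ∧
      (∀ r, 1 ≤ r → r ≤ D.length → r ≠ j →
        (C.take D.length).getD (j - 1) 0 ≠ (cycleApply D R j).getD (r - 1) 0 ∧
        (C.take D.length).getD (j - 1) 0 ≠ -((cycleApply D R j).getD (r - 1) 0)) ∧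
      slt ((C.take D.length).getD (j - 1) 0) ((cycleApply D R j).getD (j - 1) 0) ∧
      x = (cycleN n D R j +
        Nab ((C.take D.length).getD (j - 1) 0) ((cycleApply D R j).getD (j - 1) 0)
          (word D (j + 1) D.length), R.length + 1))}

noncomputable def Nstat (n : ℕ) (D C : List ℤ) : ℕ :=
  sInf {v | ∃ d, (v, d) ∈ NdesCand n D C}

noncomputable def desStat (n : ℕ) (D C : List ℤ) : ℕ :=
  sInf {d | ∃ v, (v, d) ∈ NdesCand n D C}

/-- All columns of a filling of `\hatλ`, listed from left to right. -/
def colList (n : ℕ) (lam : Fin n → ℕ) (F : Filling) : List (List ℤ) :=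
  ((List.range (lamOne n lam)).map (fun t =>
    ((List.range (conj n lam (lamOne n lam - t) - 1)).map
      (fun s => F.Cp (lamOne n lam - t) (s + 2))) ++
    (if lamOne n lam - t = 1 then [F.Cu 1 1]
     else (List.range (conj n lam (lamOne n lam - t))).map
      (fun s => F.Cu (lamOne n lam - t) (s + 1))))).flatten

/-- Sum of a binary statistic over adjacent pairs of a list. -/
def adjSumN (f : List ℤ → List ℤ → ℕ) : List (List ℤ) → ℕ
  | a :: b :: rest => f a b + adjSumN f (b :: rest)
  | _ => 0

/-- `N(σ) = ∑_{i=1}^{m-1} N(C_{i+1}, C_i) + ℓ₊(C_1)`. -/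
noncomputable def Nsigma (n : ℕ) (lam : Fin n → ℕ) (F : Filling) : ℕ :=
  adjSumN (Nstat n) (colList n lam F) + lplus ((colList n lam F).getLastD [])

/-- `des(σ) = ∑_{i=1}^{m-1} des(C_{i+1}, C_i)`. -/
noncomputable def desSigma (n : ℕ) (lam : Fin n → ℕ) (F : Filling) : ℕ :=
  adjSumN (desStat n) (colList n lam F)

/-! ### Statistics on fillings of the plain shape `λ` (for Proposition 2.2) -/

/-- The descent statistic of a filling of the Young diagram of `λ`, whose
columns are listed from left to right. -/
def desTau (cols : List (List ℤ)) : ℕ :=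
  adjSumN (fun L R => ((Finset.range L.length).filter
    (fun r => slt (R.getD r 0) (L.getD r 0))).card) cols

/-- The complementary inversion statistic `cinv = n(λ) - inv` of a filling of
the Young diagram of `λ` (columns listed from left to right, `C_k` being the
`k`-th column from the right). -/
def cinvTau (cols : List (List ℤ)) : ℕ :=
  ∑ q ∈ Finset.range cols.length,
    (((Finset.range (cols.getD q []).length) ×ˢ (Finset.range (cols.getD q []).length)).filter
      (fun pp => pp.1 < pp.2 ∧
        (((1 ≤ q ∧ pp.2 < (cols.getD (q - 1) []).length) ∧
            slt ((cols.getD q []).getD pp.2 0) ((cols.getD q []).getD pp.1 0) ∧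
            slt ((cols.getD q []).getD pp.1 0) ((cols.getD (q - 1) []).getD pp.2 0)) ∨
          (¬ (1 ≤ q ∧ pp.2 < (cols.getD (q - 1) []).length) ∧
            slt ((cols.getD q []).getD pp.2 0) ((cols.getD q []).getD pp.1 0))))).card

/-! ### Chains for the root systems `C_n` and `B_n` and the conditions (R1), (R2) -/

def isPosRootC (n : ℕ) (β : ℕ × ℤ) : Prop :=
  (1 ≤ β.1 ∧ (β.1 : ℤ) < β.2 ∧ β.2 ≤ (n : ℤ)) ∨
  (1 ≤ β.1 ∧ 0 < -β.2 ∧ (β.1 : ℤ) ≤ -β.2 ∧ -β.2 ≤ (n : ℤ))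

/-- Positive roots of `B_n` use the same symbols; `(i,-i)` encodes `ε_i`. -/
def isPosRootB (n : ℕ) (β : ℕ × ℤ) : Prop := isPosRootC n β

/-- The root of type `B_n` of a symbol: as in type `C` except `(i,-i) ↦ ε_i`. -/
def rootVecB (n : ℕ) (β : ℕ × ℤ) : Fin n → ℤ :=
  if β.2 = -(β.1 : ℤ) then (fun r => if ((r : ℕ) + 1 : ℤ) = (β.1 : ℤ) then 1 else 0)
  else rootVec n β

/-- The coroot of type `B_n`: `ε_i^∨ = 2ε_i`, long roots unchanged. -/
def corootVecB (n : ℕ) (β : ℕ × ℤ) : Fin n → ℤ :=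
  if β.2 = -(β.1 : ℤ) then (fun r => if ((r : ℕ) + 1 : ℤ) = (β.1 : ℤ) then 2 else 0)
  else rootVec n β

/-- `ω_k` in type `C_n`. -/
def omegaC (n k : ℕ) : Fin n → ℤ := fun r => if (r : ℕ) + 1 ≤ k then 1 else 0

/-- `ω_k` in type `B_n` (`ω_n` is half the sum of the `ε_i`). -/
def omegaB (n k : ℕ) : Fin n → ℚ :=
  if k = n then (fun _ => 1/2) else (fun r => if (r : ℕ) + 1 ≤ k then 1 else 0)

/-- type `B`: `Γ'_j = ((1,-j),...,(j-1,-j),(j))`. -/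
def gammaPrimeB (j : ℕ) : List (ℕ × ℤ) := gammaPrime j ++ [(j, -(j : ℤ))]

/-- type `B`: `Γ(k) = Γ'_1 ⋯ Γ'_k Γ_1(k) ⋯ Γ_k(k)` for `k < n`, and
`Γ(n) = Γ'_1 ⋯ Γ'_n`. -/
def gammaChainB (n k : ℕ) : List (ℕ × ℤ) :=
  ((List.range k).map (fun r => gammaPrimeB (r + 1))).flatten
    ++ (if k = n then [] else ((List.range k).map (fun r => gammaJK n (r + 1) k)).flatten)

/-- `(R2)`: the subsequence of all occurrences of `α, β, γ` is a concatenation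
of consecutive pairs `(γ, α)` or `(γ, β)`. -/
def altPairs (g a b : ℕ × ℤ) : List (ℕ × ℤ) → Prop
  | [] => True
  | [_] => False
  | x :: y :: rest => x = g ∧ (y = a ∨ y = b) ∧ altPairs g a b rest

/-! ### Real vector space versions (for hyperplanes) -/

def ipR (n : ℕ) (u v : Fin n → ℝ) : ℝ := ∑ r, u r * v r

def affReflR (n : ℕ) (β : ℕ × ℤ) (c : ℝ) (v : Fin n → ℝ) : Fin n → ℝ :=
  fun r => v r - (ipR n v (fun s => ((corootVec n β s : ℤ) : ℝ)) - c) *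
    ((rootVec n β r : ℤ) : ℝ)

def wActR (n : ℕ) (w : List ℤ) (v : Fin n → ℝ) : Fin n → ℝ := fun r =>
  ∑ i : Fin n, ((if w.getD i 0 = ((r : ℕ) + 1 : ℤ) then v i else 0) +
    (if w.getD i 0 = -(((r : ℕ) + 1 : ℤ)) then -(v i) else 0))

/-- `γ^∨ = (2/⟨γ,γ⟩) γ`. -/
noncomputable def corootOfR (n : ℕ) (v : Fin n → ℝ) : Fin n → ℝ :=
  fun r => (2 / ipR n v v) * v r

/-- The part of the compressed filling of shape `2λ` consisting of the columns
numbered `2λ_1, 2λ_1 - 1, ..., q` (`\barσ[q]`); column `2i` is `C'_{i,2}` and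
column `2i-1` is `C_{i,1}`. -/
def compColsGe (n : ℕ) (lam : Fin n → ℕ) (F : Filling) (q : ℕ) : List (List ℤ) :=
  ((List.range (lamOne n lam)).map (fun t =>
    (if q ≤ 2 * (lamOne n lam - t) then
      [(if 2 ≤ conj n lam (lamOne n lam - t) then F.Cp (lamOne n lam - t) 2
        else F.Cu (lamOne n lam - t) 1)] else []) ++
    (if q ≤ 2 * (lamOne n lam - t) - 1 then [F.Cu (lamOne n lam - t) 1] else []))).flatten

/-! ### The chains `Δ` and `Φ` of Section 6 -/

/-- `Δ = ((1,p+1),...,(1,n),(1,-1),(1,-n),(1,-(n-1)),...,(1,-(p+1)))`. -/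
def deltaChain (n p : ℕ) : List (ℕ × ℤ) :=
  (List.range (n - p)).map (fun r => (1, ((p + 1 + r : ℕ) : ℤ)))
    ++ [(1, (-1 : ℤ))]
    ++ (List.range (n - p)).map (fun r => (1, -((n - r : ℕ) : ℤ)))

/-- The suffix `Δ_{\bar s}` of `Δ` beginning with `(1,-s)`. -/
def deltaSuffixNeg (p s : ℕ) : List (ℕ × ℤ) :=
  (List.range (s - p)).map (fun r => (1, -((s - r : ℕ) : ℤ)))

/-- The suffix `Δ_{\bar 1}` of `Δ` beginning with `(1,-1)`. -/
def deltaSuffixBar1 (n p : ℕ) : List (ℕ × ℤ) :=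
  [(1, (-1 : ℤ))] ++ (List.range (n - p)).map (fun r => (1, -((n - r : ℕ) : ℤ)))

/-- The suffix `Δ_s` of `Δ` beginning with `(1,s)` (for `p < s ≤ n`). -/
def deltaSuffixPos (n p s : ℕ) : List (ℕ × ℤ) :=
  (List.range (n + 1 - s)).map (fun r => (1, ((s + r : ℕ) : ℤ)))
    ++ [(1, (-1 : ℤ))]
    ++ (List.range (n - p)).map (fun r => (1, -((n - r : ℕ) : ℤ)))

/-- `Φ = ((1,-1),(1,-2),(2,-2),...,(1,-n),...,(n-1,-n),(n,-n))`. -/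
def phiChain (n : ℕ) : List (ℕ × ℤ) :=
  ((List.range n).map (fun jm =>
    (List.range (jm + 1)).map (fun im => (im + 1, -((jm + 1 : ℕ) : ℤ))))).flatten

/-- The suffix `Φ_{ij}` of `Φ` beginning with `(i,-j)`. -/
def phiSuffix (n i j : ℕ) : List (ℕ × ℤ) := (phiChain n).drop ((j - 1) * j / 2 + (i - 1))

/-- `ℓ^{ij}_-(w) = #{(k,l) : k ≤ l, (k,-l)` strictly precedes `(i,-j)` in `Φ`,
`w(k) ≻ -w(l)}`. -/
def lminusBefore (w : List ℤ) (i j : ℕ) : ℕ :=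
  (((Finset.range w.length) ×ˢ (Finset.range w.length)).filter
    (fun p => p.1 ≤ p.2 ∧ (p.2 + 1 < j ∨ (p.2 + 1 = j ∧ p.1 + 1 < i)) ∧
      slt (-(w.getD p.2 0)) (w.getD p.1 0))).card


/-! ### The length as a sum of local contributions -/

/-- Contribution of the diagonal pair `(k,k)` to the length, where `x = w(k)`. -/
def diagC (x : ℤ) : ℕ := if slt (-x) x then 1 else 0

/-- Contribution to the length (to both `ℓ₊` and `ℓ₋`) of a pair of positions `k < l`,
where `x = w(k)` and `y = w(l)`. -/
def pairC (x y : ℤ) : ℕ := (if slt y x then 1 else 0) + (if slt (-y) x then 1 else 0)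

lemma sum_range_getD (l : List ℤ) (f : ℤ → ℕ) :
    ∑ m ∈ Finset.range l.length, f (l.getD m 0) = (l.map f).sum := by
  induction l with
  | nil => simp
  | cons x l ih =>
    rw [List.length_cons, Finset.sum_range_succ']
    simp only [List.getD_cons_succ, List.getD_cons_zero, ih, List.map_cons, List.sum_cons]
    omega

lemma lplus_cons (x : ℤ) (l : List ℤ) :
    lplus (x :: l) = (l.map (fun y => if slt y x then 1 else 0)).sum + lplus l := by
  unfold lplus
  rw [← sum_range_getD l (fun y => if slt y x then 1 else 0)]
  simp only [Finset.card_filter, Finset.sum_product, List.length_cons, Finset.sum_range_succ',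
    List.getD_cons_succ, List.getD_cons_zero]
  simp [add_comm]

lemma lminus_cons (x : ℤ) (l : List ℤ) :
    lminus (x :: l) = diagC x + (l.map (fun y => if slt (-y) x then 1 else 0)).sum + lminus l := by
  unfold lminus
  rw [← sum_range_getD l (fun y => if slt (-y) x then 1 else 0)]
  simp only [Finset.card_filter, Finset.sum_product, List.length_cons, Finset.sum_range_succ',
    List.getD_cons_succ, List.getD_cons_zero]
  simp [add_comm, diagC]

lemma len_cons (x : ℤ) (l : List ℤ) :
    len (x :: l) = diagC x + (l.map (pairC x)).sum + len l := by
  have h : (l.map (pairC x)).sum = (l.map (fun y => if slt y x then 1 else 0)).sum +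
      (l.map (fun y => if slt (-y) x then 1 else 0)).sum := by
    rw [← List.sum_map_add]; rfl
  simp only [len, lplus_cons, lminus_cons, h]
  omega

/-- The dependence of the length on one entry: `K` collects the contributions not involving it. -/
lemma len_middle (A B : List ℤ) : ∃ K, ∀ x, len (A ++ x :: B) =
    K + (A.map (fun y => pairC y x)).sum + diagC x + (B.map (pairC x)).sum := by
  induction A with
  | nil => exact ⟨len B, fun x => by simp [len_cons]; omega⟩
  | cons y A ih =>
    obtain ⟨K, hK⟩ := ih
    refine ⟨K + diagC y + (A.map (pairC y)).sum + (B.map (pairC y)).sum, fun x => ?_⟩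
    simp [len_cons, hK]
    omega

/-! ### Change of length under `(1,-j)` -/

/-- A window with nonzero entries of pairwise distinct absolute values. This is what is needed
from membership in `B_n`; the bound on the absolute values plays no role. -/
def Good (u : List ℤ) : Prop := 0 ∉ u ∧ (u.map Int.natAbs).Nodup

/-- Effect of `(1,-j)`, replacing `w(1) = a`, `w(j) = x` by `-x`, `-a`, on the pairs that
involve an entry `y` between positions `1` and `j`. -/
lemma pair_mid {a x y : ℤ} (ha : a ≠ 0) (hx : x ≠ 0) (hy : y ≠ 0)
    (hay : a.natAbs ≠ y.natAbs) (hxy : x.natAbs ≠ y.natAbs) (h : slt a (-x)) :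
    pairC (-x) y + pairC y (-a) = pairC a y + pairC y x + 2 * Nab a (-x) [y] := by
  rcases lt_or_gt_of_ne ha with ha | ha <;> rcases lt_or_gt_of_ne hx with hx | hx <;>
  rcases lt_or_gt_of_ne hy with hy | hy <;>
  simp [pairC, Nab, slt, List.filter_cons, ha, hx, hy, ha.not_gt, hx.not_gt, hy.not_gt] at h ⊢ <;>
  grind

/-- Effect of `(1,-j)` on the pairs that involve an entry `y` to the right of position `j`;
here both `y` and `-y` may lie between `a` and `-x`. -/
lemma pair_right {a x y : ℤ} (ha : a ≠ 0) (hx : x ≠ 0) (hy : y ≠ 0)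
    (hay : a.natAbs ≠ y.natAbs) (hxy : x.natAbs ≠ y.natAbs) (h : slt a (-x)) :
    pairC (-x) y + pairC (-a) y = pairC a y + pairC x y +
      2 * (Nab a (-x) [y] + Nab a (-x) [-y]) := by
  rcases lt_or_gt_of_ne ha with ha | ha <;> rcases lt_or_gt_of_ne hx with hx | hx <;>
  rcases lt_or_gt_of_ne hy with hy | hy <;>
  simp [pairC, Nab, slt, List.filter_cons, ha, hx, hy, ha.not_gt, hx.not_gt, hy.not_gt] at h ⊢ <;>
  grind

/-- `1` if `a ≺ b` lie on different sides of the middle of the order (`a` positive and `b`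
negative), and `0` otherwise. -/
def crossZ (a b : ℤ) : ℕ := if 0 < a ∧ b < 0 then 1 else 0

/-- Effect of `(1,-j)` on the pairs supported on the positions `1` and `j` themselves. -/
lemma pair_self {a x : ℤ} (ha : a ≠ 0) (hx : x ≠ 0) (h : slt a (-x)) :
    diagC (-x) + pairC (-x) (-a) + diagC (-a) =
      diagC a + pairC a x + diagC x + 1 + 2 * crossZ a (-x) := by
  rcases lt_or_gt_of_ne ha with ha | ha <;> rcases lt_or_gt_of_ne hx with hx | hx <;>
  simp [pairC, diagC, crossZ, slt, ha, hx, ha.not_gt, hx.not_gt] at h ⊢ <;>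
  grind

lemma pair_neg {a y : ℤ} (ha : 0 < a) (hy : y ≠ 0) (hay : a.natAbs ≠ y.natAbs) :
    pairC (-a) y = pairC a y + 2 * Nab a (-a) [y] := by
  rcases lt_or_gt_of_ne hy with hy | hy <;>
  simp [pairC, Nab, slt, List.filter_cons, ha, hy, ha.not_gt, hy.not_gt] <;>
  grind

lemma Nab_cons (a b y : ℤ) (l : List ℤ) : Nab a b (y :: l) = Nab a b [y] + Nab a b l := by
  simp only [Nab, List.filter_cons]; split_ifs <;> simp; omega

lemma Nab_append (a b : ℤ) (l m : List ℤ) : Nab a b (l ++ m) = Nab a b l + Nab a b m := by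
  simp [Nab]

lemma sum_mid {a x : ℤ} (ha : a ≠ 0) (hx : x ≠ 0) (h : slt a (-x)) (A : List ℤ)
    (hA : ∀ y ∈ A, y ≠ 0 ∧ a.natAbs ≠ y.natAbs ∧ x.natAbs ≠ y.natAbs) :
    (A.map (pairC (-x))).sum + (A.map (fun y => pairC y (-a))).sum =
      (A.map (pairC a)).sum + (A.map (fun y => pairC y x)).sum + 2 * Nab a (-x) A := by
  induction A with
  | nil => simp [Nab]
  | cons y A ih =>
    have h1 := ih fun z hz => hA z (List.mem_cons_of_mem _ hz)
    obtain ⟨hy, hay, hxy⟩ := hA y List.mem_cons_self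
    have h2 := pair_mid ha hx hy hay hxy h
    rw [Nab_cons]
    simp only [List.map_cons, List.sum_cons]
    omega

lemma sum_right {a x : ℤ} (ha : a ≠ 0) (hx : x ≠ 0) (h : slt a (-x)) (A : List ℤ)
    (hA : ∀ y ∈ A, y ≠ 0 ∧ a.natAbs ≠ y.natAbs ∧ x.natAbs ≠ y.natAbs) :
    (A.map (pairC (-x))).sum + (A.map (pairC (-a))).sum =
      (A.map (pairC a)).sum + (A.map (pairC x)).sum +
        2 * (Nab a (-x) A + Nab a (-x) (A.map (- ·))) := by
  induction A with
  | nil => simp [Nab]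
  | cons y A ih =>
    have h1 := ih fun z hz => hA z (List.mem_cons_of_mem _ hz)
    obtain ⟨hy, hay, hxy⟩ := hA y List.mem_cons_self
    have h2 := pair_right ha hx hy hay hxy h
    rw [Nab_cons, List.map_cons (f := (- ·)), Nab_cons _ _ (-y)]
    simp only [List.map_cons, List.sum_cons]
    omega

lemma sum_neg {a : ℤ} (ha : 0 < a) (A : List ℤ)
    (hA : ∀ y ∈ A, y ≠ 0 ∧ a.natAbs ≠ y.natAbs) :
    (A.map (pairC (-a))).sum = (A.map (pairC a)).sum + 2 * Nab a (-a) A := by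
  induction A with
  | nil => simp [Nab]
  | cons y A ih =>
    have h1 := ih fun z hz => hA z (List.mem_cons_of_mem _ hz)
    obtain ⟨hy, hay⟩ := hA y List.mem_cons_self
    have h2 := pair_neg ha hy hay
    rw [Nab_cons]
    simp only [List.map_cons, List.sum_cons]
    omega

lemma applyRefl_swap (a x : ℤ) (A B : List ℤ) (j : ℕ) (hj : j = A.length + 2) :
    applyRefl (a :: (A ++ x :: B)) (1, -(j : ℤ)) = (-x) :: (A ++ (-a) :: B) := by
  subst hj
  have h1 : ¬ (0 < -((A.length + 2 : ℕ) : ℤ)) := by omega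
  have h2 : ¬ (1 = (- -((A.length + 2 : ℕ) : ℤ)).toNat) := by omega
  have h3 : (- -((A.length + 2 : ℕ) : ℤ)).toNat - 1 = A.length + 1 := by omega
  simp only [applyRefl, h1, h2, h3, if_false]
  simp

lemma applyRefl_neg (a : ℤ) (A : List ℤ) : applyRefl (a :: A) (1, -1) = (-a) :: A := by
  simp [applyRefl]

lemma good_cons {a : ℤ} {A : List ℤ} (h : Good (a :: A)) :
    a ≠ 0 ∧ ∀ y ∈ A, y ≠ 0 ∧ a.natAbs ≠ y.natAbs := by
  obtain ⟨h0, h1⟩ := h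
  simp only [List.map_cons, List.nodup_cons, List.mem_map, not_exists, not_and,
    List.mem_cons, not_or] at h0 h1
  exact ⟨fun h => h0.1 h.symm, fun y hy => ⟨fun h => h0.2 (h ▸ hy), fun h => h1.1 y hy h.symm⟩⟩

lemma good_perm {u v : List ℤ} (h : Good u) (hp : (u.map Int.natAbs).Perm (v.map Int.natAbs)) :
    Good v := by
  refine ⟨fun h0 => h.1 ?_, hp.nodup_iff.1 h.2⟩
  have : (0 : ℕ) ∈ u.map Int.natAbs :=
    hp.mem_iff.2 (List.mem_map.2 ⟨0, h0, rfl⟩)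
  obtain ⟨y, hy, hy0⟩ := List.mem_map.1 this
  rwa [Int.natAbs_eq_zero.1 hy0] at hy

lemma good_neg {a : ℤ} {A : List ℤ} (h : Good (a :: A)) : Good (-a :: A) :=
  good_perm h (by simp)

lemma swap_perm {α : Type*} (a x : α) (A B : List α) : (x :: (A ++ a :: B)).Perm (a :: (A ++ x :: B)) :=
  ((List.perm_middle.cons x).trans (List.Perm.swap a x _)).trans (List.perm_middle.symm.cons a)

lemma good_swap {a x : ℤ} {A B : List ℤ} (h : Good (a :: (A ++ x :: B))) :
    Good (-x :: (A ++ -a :: B)) := by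
  refine good_perm h ?_
  simpa using (swap_perm a.natAbs x.natAbs (A.map Int.natAbs) (B.map Int.natAbs)).symm

lemma good_mid {a x : ℤ} {A B : List ℤ} (h : Good (a :: (A ++ x :: B))) :
    a ≠ 0 ∧ x ≠ 0 ∧ a.natAbs ≠ x.natAbs ∧
    (∀ y ∈ A, y ≠ 0 ∧ a.natAbs ≠ y.natAbs ∧ x.natAbs ≠ y.natAbs) ∧
    (∀ y ∈ B, y ≠ 0 ∧ a.natAbs ≠ y.natAbs ∧ x.natAbs ≠ y.natAbs) := by
  have h1 := good_cons h
  have h2 := good_cons (good_perm h ((swap_perm x a A B).map _) : Good (x :: (A ++ a :: B)))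
  refine ⟨h1.1, h2.1, (h1.2 x (by simp)).2, fun y hy => ?_, fun y hy => ?_⟩
  · exact ⟨(h1.2 y (by simp [hy])).1, (h1.2 y (by simp [hy])).2, (h2.2 y (by simp [hy])).2⟩
  · exact ⟨(h1.2 y (by simp [hy])).1, (h1.2 y (by simp [hy])).2, (h2.2 y (by simp [hy])).2⟩

/-- The length increment of `(1,-j)` when `a = w(1) ≺ -w(j) = -x`, with `A` the word strictly
between positions `1` and `j` and `B` the word after `j`. -/
lemma len_swap {a x : ℤ} {A B : List ℤ} (hg : Good (a :: (A ++ x :: B))) (h : slt a (-x)) :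
    len (-x :: (A ++ -a :: B)) = len (a :: (A ++ x :: B)) + 1 +
      2 * (Nab a (-x) A + (Nab a (-x) B + Nab a (-x) (B.map (- ·))) + crossZ a (-x)) := by
  obtain ⟨ha, hx, -, hA, hB⟩ := good_mid hg
  obtain ⟨K, hK⟩ := len_middle A B
  have h1 := sum_mid ha hx h A hA
  have h2 := sum_right ha hx h B hB
  have h3 := pair_self ha hx h
  simp only [len_cons _ (A ++ _), hK, List.map_append, List.sum_append, List.map_cons,
    List.sum_cons]
  omega

lemma len_neg {a : ℤ} {A : List ℤ} (hg : Good (a :: A)) (h : 0 < a) :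
    len (-a :: A) = len (a :: A) + 1 + 2 * Nab a (-a) A := by
  have h1 := sum_neg h A (good_cons hg).2
  have h2 : diagC (-a) = 1 := by simp [diagC, slt, h]
  have h3 : diagC a = 0 := by simp [diagC, slt]; omega
  simp only [len_cons, h2, h3]
  omega

lemma slt_total {a b : ℤ} (ha : a ≠ 0) (hb : b ≠ 0) (h : a ≠ b) : slt a b ∨ slt b a := by
  unfold slt; omega

/-- `(1,-j)` is an involution, so the increment formula also decides when the length drops. -/
lemma len_swap_iff {a x : ℤ} {A B : List ℤ} (hg : Good (a :: (A ++ x :: B))) :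
    len (a :: (A ++ x :: B)) < len (-x :: (A ++ -a :: B)) ↔ slt a (-x) := by
  refine ⟨fun hl => ?_, fun h => by have := len_swap hg h; omega⟩
  by_contra hn
  obtain ⟨ha, hx, hax, -⟩ := good_mid hg
  have h : slt (-x) (- -a) := by
    rcases slt_total ha (neg_ne_zero.2 hx) (by omega) with h | h
    · exact absurd h hn
    · simpa using h
  have := len_swap (good_swap hg) h
  simp only [neg_neg] at this
  omega

lemma len_neg_iff {a : ℤ} {A : List ℤ} (hg : Good (a :: A)) :
    len (a :: A) < len (-a :: A) ↔ 0 < a := by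
  refine ⟨fun hl => ?_, fun h => by have := len_neg hg h; omega⟩
  by_contra hn
  have := len_neg (good_neg hg) (by have := (good_cons hg).1; omega)
  simp only [neg_neg] at this
  omega

/-- The reflections `(1,-j)` with `1 ≤ j ≤ n`. -/
def IsBar (n : ℕ) (t : ℕ × ℤ) : Prop := ∃ j : ℕ, 1 ≤ j ∧ j ≤ n ∧ t = (1, -(j : ℤ))

lemma exists_split {u : List ℤ} {j : ℕ} (h2 : 2 ≤ j) (hj : j ≤ u.length) :
    ∃ a A x B, u = a :: (A ++ x :: B) ∧ j = A.length + 2 := by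
  cases u with
  | nil => simp at hj; omega
  | cons a l =>
    simp only [List.length_cons] at hj
    refine ⟨a, l.take (j - 2), l[j - 2], l.drop (j - 2 + 1), ?_, ?_⟩
    · rw [← List.drop_eq_getElem_cons, List.take_append_drop]
    · simp; omega

/-- A length-increasing `(1,-j)` strictly increases the first entry, and changes the length by
an odd amount. -/
lemma step {u : List ℤ} (hg : Good u) {t : ℕ × ℤ} (ht : IsBar u.length t) :
    Good (applyRefl u t) ∧ (applyRefl u t).length = u.length ∧
    (len u < len (applyRefl u t) → slt (u.getD 0 0) ((applyRefl u t).getD 0 0) ∧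
      ∃ k, len (applyRefl u t) = len u + 1 + 2 * k) := by
  obtain ⟨j, h1, hj, rfl⟩ := ht
  rcases Nat.lt_or_ge j 2 with h2 | h2
  · obtain rfl : j = 1 := by omega
    obtain ⟨a, A, rfl⟩ := List.exists_cons_of_length_pos (by omega : 0 < u.length)
    simp only [Nat.cast_one, applyRefl_neg, List.length_cons, List.getD_cons_zero, true_and]
    refine ⟨good_neg hg, fun hl => ?_⟩
    have ha := (len_neg_iff hg).1 hl
    exact ⟨by unfold slt; omega, _, len_neg hg ha⟩
  · obtain ⟨a, A, x, B, rfl, hjA⟩ := exists_split h2 hj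
    rw [applyRefl_swap _ _ _ _ _ hjA]
    refine ⟨good_swap hg, by simp, fun hl => ?_⟩
    have ha := (len_swap_iff hg).1 hl
    exact ⟨by simpa using ha, _, len_swap hg ha⟩

/-! ### The generating function, computed recursively along a chain -/

/-- The generating function of the increasing-admissible subsequences of a chain that bring `b`
to the first position, defined by deciding whether the first reflection of the chain is used.
The exponent of `t` is accumulated step by step, as half of each length increment minus one. -/
noncomputable def chainSum (b : ℤ) : List (ℕ × ℤ) → List ℤ → Polynomial ℤ
  | [], u => if u.getD 0 0 = b then 1 else 0
  | t :: ts, u => chainSum b ts u +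
      if len u < len (applyRefl u t) then
        (Polynomial.X : Polynomial ℤ) ^ ((len (applyRefl u t) - len u - 1) / 2) *
          (1 - Polynomial.X) * chainSum b ts (applyRefl u t)
      else 0

lemma slt_trans {a b c : ℤ} (h : slt a b) (h' : slt b c) : slt a c := by
  unfold slt at *; omega

lemma slt_irrefl (a : ℤ) : ¬ slt a a := by
  unfold slt; omega

lemma chainSum_eq_zero_of_slt (b : ℤ) (L : List (ℕ × ℤ)) (u : List ℤ) (hg : Good u)
    (hL : ∀ t ∈ L, IsBar u.length t) (hb : slt b (u.getD 0 0)) : chainSum b L u = 0 := by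
  induction L generalizing u with
  | nil =>
    rw [chainSum, if_neg]
    rintro h
    rw [h] at hb
    exact slt_irrefl _ hb
  | cons t ts ih =>
    obtain ⟨s1, s2, s3⟩ := step hg (hL t List.mem_cons_self)
    have hts : ∀ t' ∈ ts, IsBar u.length t' := fun t' h => hL t' (List.mem_cons_of_mem _ h)
    rw [chainSum, ih u hg hts hb]
    split_ifs with hl
    · rw [ih _ s1 (s2 ▸ hts) (slt_trans hb (s3 hl).1)]; simp
    · simp

/-- If `b` is already in first position, only the empty subsequence contributes. -/
lemma chainSum_eq_one (b : ℤ) (L : List (ℕ × ℤ)) (u : List ℤ) (hg : Good u)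
    (hL : ∀ t ∈ L, IsBar u.length t) (hb : u.getD 0 0 = b) : chainSum b L u = 1 := by
  induction L with
  | nil => rw [chainSum, if_pos hb]
  | cons t ts ih =>
    obtain ⟨s1, s2, s3⟩ := step hg (hL t List.mem_cons_self)
    have hts : ∀ t' ∈ ts, IsBar u.length t' := fun t' h => hL t' (List.mem_cons_of_mem _ h)
    rw [chainSum, ih hts]
    split_ifs with hl
    · rw [chainSum_eq_zero_of_slt b ts _ s1 (s2 ▸ hts) (hb ▸ (s3 hl).1)]; simp
    · simp

/-- If no reflection of the chain moves `c` from position `q`, then `-c` never reaches the first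
position, as `c` and `-c` cannot both occur in a window. -/
lemma chainSum_eq_zero_of_unreached (c : ℤ) (q : ℕ) (hq : 2 ≤ q) (L : List (ℕ × ℤ)) (u : List ℤ)
    (hg : Good u) (hqu : q ≤ u.length) (hL : ∀ t ∈ L, IsBar u.length t)
    (hLq : ∀ t ∈ L, t.2 ≠ -(q : ℤ)) (hc : u.getD (q - 1) 0 = c) : chainSum (-c) L u = 0 := by
  induction L generalizing u with
  | nil =>
    rw [chainSum, if_neg]
    obtain ⟨a, A, x, B, rfl, rfl⟩ := exists_split hq hqu
    obtain ⟨-, -, hax, -⟩ := good_mid hg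
    simp at hc ⊢
    omega
  | cons t ts ih =>
    obtain ⟨s1, s2, s3⟩ := step hg (hL t List.mem_cons_self)
    have hts : ∀ t' ∈ ts, IsBar u.length t' := fun t' h => hL t' (List.mem_cons_of_mem _ h)
    have htq : ∀ t' ∈ ts, t'.2 ≠ -(q : ℤ) := fun t' h => hLq t' (List.mem_cons_of_mem _ h)
    have hget : (applyRefl u t).getD (q - 1) 0 = c := by
      obtain ⟨j, h1, hj, rfl⟩ := hL t List.mem_cons_self
      have hjq : j ≠ q := fun h => hLq _ List.mem_cons_self (by simp [h])
      rw [← hc]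
      unfold applyRefl
      simp only [List.getD_eq_getElem?_getD]
      split_ifs
      · omega
      · rw [List.getElem?_set_ne (by omega)]
      · rw [List.getElem?_set_ne (by simp; omega), List.getElem?_set_ne (by omega)]
    rw [chainSum, ih u hg hqu hts htq hc, ih _ s1 (s2 ▸ hqu) (s2 ▸ hts) htq hget]
    simp

lemma suffixNeg_succ {p s : ℕ} (h : p ≤ s) :
    deltaSuffixNeg p (s + 1) = (1, -((s + 1 : ℕ) : ℤ)) :: deltaSuffixNeg p s := by
  unfold deltaSuffixNeg
  rw [show s + 1 - p = (s - p) + 1 by omega, List.range_succ_eq_map]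
  simp [Function.comp_def]

lemma mem_suffixNeg {p s : ℕ} {t : ℕ × ℤ} (h : t ∈ deltaSuffixNeg p s) :
    ∃ j : ℕ, p < j ∧ j ≤ s ∧ t = (1, -(j : ℤ)) := by
  unfold deltaSuffixNeg at h
  obtain ⟨r, hr, rfl⟩ := List.mem_map.1 h
  rw [List.mem_range] at hr
  exact ⟨s - r, by omega, by omega, rfl⟩

lemma chainSum_swap (b : ℤ) (ts : List (ℕ × ℤ)) (a x : ℤ) (A B : List ℤ)
    (hg : Good (a :: (A ++ x :: B))) (j : ℕ) (hj : j = A.length + 2) :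
    chainSum b ((1, -(j : ℤ)) :: ts) (a :: (A ++ x :: B)) =
      chainSum b ts (a :: (A ++ x :: B)) + if slt a (-x) then
        (Polynomial.X : Polynomial ℤ) ^ (Nab a (-x) A + (Nab a (-x) B + Nab a (-x) (B.map (- ·)))
          + crossZ a (-x)) * (1 - Polynomial.X) * chainSum b ts (-x :: (A ++ -a :: B)) else 0 := by
  rw [chainSum, applyRefl_swap _ _ _ _ _ hj]
  congr 1
  by_cases h : slt a (-x)
  · rw [if_pos ((len_swap_iff hg).2 h), if_pos h, len_swap hg h]
    congr 3
    omega
  · rw [if_neg (fun hl => h ((len_swap_iff hg).1 hl)), if_neg h]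

/-! ### Evaluation on the suffixes of `Δ` -/

lemma Nab_split {a z b : ℤ} (h1 : slt a z) (h2 : slt z b) (l : List ℤ) (hz : z ∉ l) :
    Nab a b l = Nab a z l + Nab z b l := by
  induction l with
  | nil => simp [Nab]
  | cons y l ih =>
    rw [Nab_cons, Nab_cons a z, Nab_cons z b, ih (fun h => hz (List.mem_cons_of_mem _ h))]
    have hy : y ≠ z := fun h => hz (by simp [h])
    have : Nab a b [y] = Nab a z [y] + Nab z b [y] := by
      simp only [Nab, List.filter_cons, List.filter_nil, decide_eq_true_eq]
      unfold slt at *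
      split_ifs <;> first | rfl | (exfalso; omega)
    omega

lemma Nab_singleton (a b y : ℤ) : Nab a b [y] = if slt a y ∧ slt y b then 1 else 0 := by
  simp only [Nab, List.filter_cons, List.filter_nil, decide_eq_true_eq]
  split_ifs <;> rfl

/-- With `z = -x` and `b = -c`, the letters `±a`, `c` and the sign terms picked up when going
from `a` to `b` through `z` account exactly for the letter `x` and the sign term of the direct
move from `a` to `b`. -/
lemma boundary_identity {a x c : ℤ} (hac : a.natAbs ≠ c.natAbs)
    (hxc : x.natAbs ≠ c.natAbs) (h1 : slt a (-x)) (h2 : slt (-x) (-c)) :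
    Nab a (-x) [c] + Nab (-x) (-c) [-a] + Nab (-x) (-c) [a] + crossZ a (-x) + crossZ (-x) (-c) =
      Nab a (-c) [x] + crossZ a (-c) := by
  simp only [Nab_singleton, crossZ]
  unfold slt at *
  rcases lt_trichotomy a 0 with ha | ha | ha <;> rcases lt_trichotomy x 0 with hx | hx | hx <;>
  rcases lt_trichotomy c 0 with hc | hc | hc <;>
  simp [ha, hx, hc, ha.not_gt, hx.not_gt, hc.not_gt] at h1 h2 ⊢ <;> grind

/-- The generating function of the suffix `Δ_{\bar s}` for `w = a P c Q B`, where `P c Q` fills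
positions `2,...,s`. The induction adds the last letter `x` of `Q`: with `E` the claimed
exponent, if `a ≺ -x ≺ b` then skipping `(1,-s)` gives `t^(E+1) (1-t)` and using it gives
`t^E (1-t)^2`; otherwise only skipping contributes, with the exponent unchanged. -/
lemma chainSum_suffixNeg (p : ℕ) (c : ℤ) (P : List ℤ) (hp1 : 1 ≤ p) (hp : p ≤ P.length + 1)
    (Q : List ℤ) : ∀ (a : ℤ) (B : List ℤ),
    Good (a :: (P ++ c :: (Q ++ B))) → slt a (-c) →
    chainSum (-c) (deltaSuffixNeg p (P.length + Q.length + 2)) (a :: (P ++ c :: (Q ++ B))) =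
      (Polynomial.X : Polynomial ℤ) ^ (Nab a (-c) P + Nab a (-c) Q +
        (Nab a (-c) B + Nab a (-c) (B.map (- ·))) + crossZ a (-c)) * (1 - Polynomial.X) := by
  induction Q using List.reverseRecOn with
  | nil =>
    intro a B hg hac
    simp only [List.nil_append, List.length_nil, Nat.add_zero] at hg ⊢
    have hbar : ∀ t ∈ deltaSuffixNeg p (P.length + 1), IsBar (P.length + B.length + 2) t := by
      intro t ht
      obtain ⟨j, h1, h2, rfl⟩ := mem_suffixNeg ht
      exact ⟨j, by omega, by omega, rfl⟩
    rw [suffixNeg_succ hp, chainSum_swap _ _ _ _ _ _ hg _ rfl, if_pos hac,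
      chainSum_eq_zero_of_unreached c (P.length + 2) (by omega) _ _ hg (by simp)
        (by convert hbar using 4; simp; omega) ?_ (by simp),
      chainSum_eq_one _ _ _ (good_swap hg) (by convert hbar using 4; simp; omega) (by simp)]
    · simp [Nab]
    · intro t ht
      obtain ⟨j, h1, h2, rfl⟩ := mem_suffixNeg ht
      simp only [ne_eq, neg_inj, Nat.cast_inj]
      omega
  | append_singleton Q x ih =>
    intro a B hg hac
    have e : ∀ y a' : ℤ, a' :: (P ++ c :: ((Q ++ [y]) ++ B)) = a' :: ((P ++ c :: Q) ++ y :: B) := by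
      intro y a'; simp
    have e' : ∀ y a' : ℤ, a' :: ((P ++ c :: Q) ++ y :: B) = a' :: (P ++ c :: (Q ++ y :: B)) := by
      intro y a'; simp
    rw [e] at hg ⊢
    have hlen : P.length + (Q ++ [x]).length + 2 = (P.length + Q.length + 2) + 1 := by
      simp; omega
    have hj : (P.length + Q.length + 2) + 1 = (P ++ c :: Q).length + 2 := by simp; omega
    rw [hlen, suffixNeg_succ (by omega), chainSum_swap _ _ _ _ _ _ hg _ hj]
    obtain ⟨ha, hx, hax, hA, hB⟩ := good_mid hg
    have hcm := hA c (by simp)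
    have hfirst := ih a (x :: B) (e' x a ▸ hg) hac
    rw [← e'] at hfirst
    rw [hfirst, Nab_cons _ _ x B, List.map_cons, Nab_cons _ _ (-x), Nab_append _ _ Q]
    by_cases h1 : slt a (-x)
    · rw [if_pos h1]
      rcases slt_total (neg_ne_zero.2 hx) (neg_ne_zero.2 hcm.1) (by omega) with h2 | h2
      · have hsecond := ih (-x) (-a :: B) (e' (-a) (-x) ▸ good_swap hg) h2
        rw [← e'] at hsecond
        rw [hsecond, Nab_cons _ _ (-a) B, List.map_cons, neg_neg, Nab_cons _ _ a]
        have hz : ∀ y, x.natAbs ≠ y.natAbs → -x ≠ y := by intro y hy h; omega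
        have hP := Nab_split h1 h2 P fun h => hz _ (hA _ (by simp [h])).2.2 rfl
        have hQ := Nab_split h1 h2 Q fun h => hz _ (hA _ (by simp [h])).2.2 rfl
        have hBs := Nab_split h1 h2 B fun h => hz _ (hB _ h).2.2 rfl
        have hBn := Nab_split h1 h2 (B.map (- ·)) fun h => by
          obtain ⟨y, hy, hyx⟩ := List.mem_map.1 h
          have := (hB y hy).2.2
          omega
        have hbd := boundary_identity hcm.2.1 hcm.2.2 h1 h2
        have hone : Nab a (-c) [-x] = 1 := by rw [Nab_singleton, if_pos ⟨h1, h2⟩]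
        rw [Nab_append _ _ P, Nab_cons _ _ c]
        set E := Nab a (-c) P + (Nab a (-c) Q + Nab a (-c) [x]) +
          (Nab a (-c) B + Nab a (-c) (B.map (- ·))) + crossZ a (-c) with hE
        have e1 : Nab a (-c) P + Nab a (-c) Q + (Nab a (-c) [x] + Nab a (-c) B +
          (Nab a (-c) [-x] + Nab a (-c) (B.map (- ·)))) + crossZ a (-c) = E + 1 := by omega
        rw [e1]
        have e2 : E = (Nab a (-x) P + (Nab a (-x) [c] + Nab a (-x) Q) +
            (Nab a (-x) B + Nab a (-x) (B.map (- ·))) + crossZ a (-x)) +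
            (Nab (-x) (-c) P + Nab (-x) (-c) Q + (Nab (-x) (-c) [-a] + Nab (-x) (-c) B +
            (Nab (-x) (-c) [a] + Nab (-x) (-c) (B.map (- ·)))) + crossZ (-x) (-c)) := by omega
        rw [pow_succ]
        have e3 := congrArg ((Polynomial.X : Polynomial ℤ) ^ ·) e2
        simp only [pow_add _ (_ + (Nab a (-x) B + _) + _)] at e3
        linear_combination (-(1 - Polynomial.X) ^ 2 : Polynomial ℤ) * e3
      · rw [chainSum_eq_zero_of_slt _ _ _ (good_swap hg) ?_ (by simpa using h2)]
        · rw [Nab_singleton a (-c) (-x),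
            if_neg fun h => slt_irrefl _ (slt_trans h2 h.2)]
          rw [mul_zero, add_zero]
          congr 2
          omega
        · intro t ht
          obtain ⟨j, j1, j2, rfl⟩ := mem_suffixNeg ht
          exact ⟨j, by omega, by simp; omega, rfl⟩
    · rw [if_neg h1, Nab_singleton a (-c) (-x), if_neg fun h => h1 h.1, add_zero]
      congr 2
      omega

/-- The generating function of the suffix `Δ_{\bar 1}`. Using `(1,-1)` contributes only if
`a ≺ -a ≺ b`, in which case the extra `t` in the other term is cancelled as for the other
reflections. -/
lemma chainSum_bar1 (n p : ℕ) (a c : ℤ) (P Q : List ℤ) (hp1 : 1 ≤ p) (hp : p ≤ P.length + 1)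
    (hn : n = P.length + Q.length + 2) (hg : Good (a :: (P ++ c :: Q))) (hac : slt a (-c)) :
    chainSum (-c) (deltaSuffixBar1 n p) (a :: (P ++ c :: Q)) =
      (Polynomial.X : Polynomial ℤ) ^ (Nab a (-c) P + Nab a (-c) Q +
        (if 0 < a ∧ a < c then 1 else 0)) * (1 - Polynomial.X) := by
  have hs : deltaSuffixBar1 n p = (1, -1) :: deltaSuffixNeg p n := rfl
  obtain ⟨ha, hc, hacn, hA, hB⟩ := good_mid hg
  have key : ∀ a', Good (a' :: (P ++ c :: Q)) → slt a' (-c) →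
      chainSum (-c) (deltaSuffixNeg p n) (a' :: (P ++ c :: Q)) =
      (Polynomial.X : Polynomial ℤ) ^ (Nab a' (-c) P + Nab a' (-c) Q + crossZ a' (-c)) *
        (1 - Polynomial.X) := by
    intro a' hg' h'
    have := chainSum_suffixNeg p c P hp1 hp Q a' [] (by simpa using hg') h'
    rw [hn]
    simpa [Nab] using this
  rw [hs, chainSum, applyRefl_neg, key a hg hac]
  by_cases h0 : 0 < a
  · rw [if_pos ((len_neg_iff hg).2 h0), len_neg hg h0]
    rcases slt_total (neg_ne_zero.2 ha) (neg_ne_zero.2 hc) (by omega) with h2 | h2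
    · have h1 : slt a (-a) := by unfold slt; omega
      have hP := Nab_split h1 h2 P fun h => by have := (hA _ h).2.1; omega
      have hQ := Nab_split h1 h2 Q fun h => by have := (hB _ h).2.1; omega
      have x1 : crossZ a (-c) = 1 := by unfold crossZ; unfold slt at h2; rw [if_pos]; omega
      have x2 : crossZ (-a) (-c) = 0 := by unfold crossZ; rw [if_neg]; omega
      have x3 : Nab a (-a) [c] = 0 := by
        rw [Nab_singleton, if_neg]; unfold slt at *; omega
      rw [key (-a) (good_neg hg) h2, Nab_append, Nab_cons, x1, x2, x3,
        if_neg (by unfold slt at h2; omega), hP, hQ]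
      have x4 : ∀ l m : ℕ, (l + 1 + 2 * m - l - 1) / 2 = m := by intro l m; omega
      rw [x4]
      ring
    · rw [chainSum_eq_zero_of_slt _ _ _ (good_neg hg) ?_ (by simpa using h2)]
      · rw [mul_zero, add_zero]
        congr 3
        unfold crossZ
        unfold slt at hac h2
        split_ifs <;> omega
      · intro t ht
        obtain ⟨j, j1, j2, rfl⟩ := mem_suffixNeg ht
        exact ⟨j, by omega, by simp; omega, rfl⟩
  · rw [if_neg fun h => h0 ((len_neg_iff hg).1 h), if_neg fun h => h0 h.1, crossZ,
      if_neg fun h => h0 h.1, add_zero]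

/-! ### From sums over position sets to the recursion -/

/-- The contribution of a single subsequence `T` to the sum, zero if `T` is not
increasing-admissible or does not bring `b` to the first position. -/
noncomputable def chainTerm (b : ℤ) (u : List ℤ) (T : List (ℕ × ℤ)) : Polynomial ℤ :=
  if incChain u T = true ∧ (applyAll u T).getD 0 0 = b then
    (Polynomial.X : Polynomial ℤ) ^ ((len (applyAll u T) - len u - T.length) / 2) *
      (1 - Polynomial.X) ^ T.length
  else 0

lemma incChain_length_le (T : List (ℕ × ℤ)) (u : List ℤ) (h : incChain u T = true) :
    len u + T.length ≤ len (applyAll u T) := by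
  induction T generalizing u with
  | nil => simp [applyAll]
  | cons t T ih =>
    simp only [incChain, Bool.and_eq_true, decide_eq_true_eq] at h
    have := ih _ h.2
    simp only [applyAll, List.foldl_cons, List.length_cons] at this ⊢
    omega

/-- The parity of the first increment makes the halved exponent additive. -/
lemma chainTerm_cons (b : ℤ) (u : List ℤ) (hg : Good u) (t : ℕ × ℤ) (ht : IsBar u.length t)
    (T : List (ℕ × ℤ)) : chainTerm b u (t :: T) = (if len u < len (applyRefl u t) then
        (Polynomial.X : Polynomial ℤ) ^ ((len (applyRefl u t) - len u - 1) / 2) *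
          (1 - Polynomial.X) else 0) * chainTerm b (applyRefl u t) T := by
  have happ : applyAll u (t :: T) = applyAll (applyRefl u t) T := rfl
  unfold chainTerm
  rw [happ]
  simp only [incChain, Bool.and_eq_true, decide_eq_true_eq]
  by_cases hl : len u < len (applyRefl u t)
  · by_cases hr : incChain (applyRefl u t) T = true ∧ (applyAll (applyRefl u t) T).getD 0 0 = b
    · rw [if_pos ⟨⟨hl, hr.1⟩, hr.2⟩, if_pos hl, if_pos hr]
      obtain ⟨k, hk⟩ := ((step hg ht).2.2 hl).2
      have hT := incChain_length_le _ _ hr.1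
      have e : (len (applyAll (applyRefl u t) T) - len u - (t :: T).length) / 2 =
          (len (applyRefl u t) - len u - 1) / 2 +
          (len (applyAll (applyRefl u t) T) - len (applyRefl u t) - T.length) / 2 := by
        simp only [List.length_cons]
        omega
      rw [e, List.length_cons]
      ring
    · rw [if_neg (fun h => hr ⟨h.1.2, h.2⟩), if_neg hr, mul_zero]
  · rw [if_neg (fun h => hl h.1.1), if_neg hl, zero_mul]

lemma sum_sublists_chainTerm (b : ℤ) (L : List (ℕ × ℤ)) (u : List ℤ) (hg : Good u)
    (hL : ∀ t ∈ L, IsBar u.length t) :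
    (L.sublists'.map (chainTerm b u)).sum = chainSum b L u := by
  induction L generalizing u with
  | nil => simp [chainTerm, chainSum, incChain, applyAll]
  | cons t ts ih =>
    obtain ⟨s1, s2, -⟩ := step hg (hL t List.mem_cons_self)
    have hts : ∀ t' ∈ ts, IsBar u.length t' := fun t' h => hL t' (List.mem_cons_of_mem _ h)
    rw [List.sublists'_cons, List.map_append, List.sum_append, ih u hg hts, chainSum,
      List.map_map]
    have : chainTerm b u ∘ List.cons t = fun T => (if len u < len (applyRefl u t) then
        (Polynomial.X : Polynomial ℤ) ^ ((len (applyRefl u t) - len u - 1) / 2) *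
          (1 - Polynomial.X) else 0) * chainTerm b (applyRefl u t) T :=
      funext fun T => chainTerm_cons b u hg t (hL t List.mem_cons_self) T
    rw [this, List.sum_map_mul_left, ih _ s1 (s2 ▸ hts)]
    split_ifs <;> simp

lemma sort_image_succ (J : Finset ℕ) :
    (J.image Nat.succ).sort (· ≤ ·) = (J.sort (· ≤ ·)).map Nat.succ := by
  have h := Finset.map_sort (s := J) (f := ⟨Nat.succ, Nat.succ_injective⟩) (r := (· ≤ ·))
    (r' := (· ≤ ·)) (fun a _ b _ => Nat.succ_le_succ_iff.symm)
  rw [Finset.map_eq_image] at h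
  exact h.symm

lemma selChain_image_succ (t : ℕ × ℤ) (L : List (ℕ × ℤ)) (J : Finset ℕ) :
    selChain (t :: L) (J.image Nat.succ) = selChain L J := by
  unfold selChain
  rw [sort_image_succ, List.map_map]
  rfl

lemma selChain_insert_zero (t : ℕ × ℤ) (L : List (ℕ × ℤ)) (J : Finset ℕ) :
    selChain (t :: L) (insert 0 (J.image Nat.succ)) = t :: selChain L J := by
  rw [← selChain_image_succ t L J]
  unfold selChain
  rw [Finset.sort_insert]
  · simp
  · simp
  · simp

/-- Sets of positions in a list enumerate its sublists. -/
lemma sum_selChain {M : Type*} [AddCommMonoid M] (L : List (ℕ × ℤ)) (f : List (ℕ × ℤ) → M) :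
    ∑ J ∈ (Finset.range L.length).powerset, f (selChain L J) = (L.sublists'.map f).sum := by
  induction L generalizing f with
  | nil => simp [selChain]
  | cons t L ih =>
    have hr : Finset.range (t :: L).length = insert 0 ((Finset.range L.length).image Nat.succ) := by
      rw [List.length_cons, Finset.range_eq_Ico, Finset.range_eq_Ico]
      ext i
      cases i <;> simp
    have hinj : Function.Injective (Finset.image Nat.succ) :=
      Finset.image_injective Nat.succ_injective
    rw [hr, Finset.sum_powerset_insert (by simp), Finset.powerset_image,
      Finset.sum_image hinj.injOn, Finset.sum_image hinj.injOn]
    simp only [selChain_image_succ, selChain_insert_zero]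
    rw [ih f, ih (fun T => f (t :: T)), List.sublists'_cons, List.map_append, List.sum_append,
      List.map_map]
    rfl

lemma good_of_mem_allWindows {n : ℕ} {w : List ℤ} (hw : w ∈ allWindows n) :
    Good w ∧ w.length = n := by
  unfold allWindows at hw
  obtain ⟨⟨σ, ε⟩, -, rfl⟩ := Finset.mem_image.1 hw
  refine ⟨⟨?_, ?_⟩, by simp⟩
  · rw [List.mem_map]
    rintro ⟨i, -, hi⟩
    dsimp only at hi
    split_ifs at hi <;> omega
  · rw [List.map_map]
    refine (List.nodup_finRange n).map ?_
    intro i j hij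
    simp only [Function.comp] at hij
    apply σ.injective
    apply Fin.ext
    split_ifs at hij <;> omega

/-- formula (6.7): the sum over increasing-admissible
subsequences of the suffix `Δ_{\bar 1}`, with `c = w(q)`, `b = -c`,
`a = w(1) ≺ b`. -/
theorem delta_sum_bar1_suffix (n : ℕ) (w : List ℤ) (hw : w ∈ allWindows n)
    (p q : ℕ) (hp1 : 1 ≤ p) (hp2 : p ≤ n) (hpq : p < q) (hqn : q ≤ n)
    (hab : slt (w.getD 0 0) (-(w.getD (q - 1) 0))) :
    (∑ᶠ (J : Finset ℕ) (_ : J ⊆ Finset.range (deltaSuffixBar1 n p).length ∧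
        incChain w (selChain (deltaSuffixBar1 n p) J) = true ∧
        (applyAll w (selChain (deltaSuffixBar1 n p) J)).getD 0 0 = -(w.getD (q - 1) 0)),
      (Polynomial.X : Polynomial ℤ) ^
          ((len (applyAll w (selChain (deltaSuffixBar1 n p) J)) - len w - J.card) / 2) *
        (1 - Polynomial.X) ^ J.card)
      = (Polynomial.X : Polynomial ℤ) ^
          (Nab (w.getD 0 0) (-(w.getD (q - 1) 0)) (word w 2 (q - 1)) +
            Nab (w.getD 0 0) (-(w.getD (q - 1) 0)) (word w (q + 1) n) +
            (if 0 < w.getD 0 0 ∧ w.getD 0 0 < w.getD (q - 1) 0 then 1 else 0)) *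
          (1 - Polynomial.X) := by
  obtain ⟨hg, hlen⟩ := good_of_mem_allWindows hw
  obtain ⟨a, P, c, Q, rfl, rfl⟩ := exists_split (by omega : 2 ≤ q) (by omega : q ≤ w.length)
  have hc : (a :: (P ++ c :: Q)).getD (P.length + 2 - 1) 0 = c := by simp
  simp only [hc, List.getD_cons_zero] at hab ⊢
  have hn : n = P.length + Q.length + 2 := by
    rw [← hlen]; simp; omega
  have hw1 : word (a :: (P ++ c :: Q)) 2 (P.length + 2 - 1) = P := by simp [word]
  have hw2 : word (a :: (P ++ c :: Q)) (P.length + 2 + 1) n = Q := by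
    rw [word, show P.length + 2 + 1 - 1 = (P.length + 1) + 1 by omega, List.drop_succ_cons,
      List.drop_append, List.drop_eq_nil_of_le (by omega)]
    simp
    omega
  rw [hw1, hw2, ← chainSum_bar1 n p a c P Q hp1 (by omega) hn hg hab,
    ← sum_sublists_chainTerm _ _ _ hg ?_, ← sum_selChain]
  · have hcard : ∀ J : Finset ℕ, (selChain (deltaSuffixBar1 n p) J).length = J.card := by
      intro J; simp [selChain]
    rw [finsum_eq_sum_of_support_subset (s := (Finset.range (deltaSuffixBar1 n p).length).powerset)]
    · refine Finset.sum_congr rfl fun J hJ => ?_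
      rw [Finset.mem_powerset] at hJ
      rw [finsum_eq_if]
      simp only [hJ, true_and, chainTerm, hcard]
    · intro J hJ
      rw [Function.mem_support, finsum_eq_if] at hJ
      simp only [Finset.coe_powerset, Set.mem_preimage, Set.mem_powerset_iff, Finset.coe_subset]
      by_contra hn
      exact hJ (if_neg fun h => hn h.1)
  · intro t ht
    rcases List.mem_append.1 ht with ht | ht
    · exact ⟨1, le_rfl, by omega, by simpa using ht⟩
    · obtain ⟨j, j1, j2, rfl⟩ := mem_suffixNeg (p := p) (s := n) ht
      exact ⟨j, by omega, by omega, rfl⟩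
end HL
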